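/- Let E be a finite multiset of positive integers, let k ≥ 2 be even, and let n_1 < n_2 < ⋯ < n_k be integers with n_1 ≥ 0. Let q be the partition consisting of two copies of each element of E together with the parts 2n_1+1, …, 2n_k+1 and one additional part 1 (a partition of an odd integer 2n+1), and let p_2 be the partition consisting of two copies of each element of E together with the parts of the Sp-collapse of [(2n_k+1)(2n_{k−1}+1)⋯(2n_1+1)]. Then the Sp-collapse of the transpose of p_2 equals the transpose of the Sp-collapse of q^−; that is, ((p_2)^t)_{Sp} = ((q^−)_{Sp})^t = η(q). -/

import Mathlib

/-!
Partitions are handled through the function `truncSum p t = ∑ x ∈ p, min x t`, which is the sum of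
the `t` largest parts of the transpose of `p` (`topSum_transposeP`).  Three facts make it useful.

* Dominance is pointwise comparison with the order reversed: for partitions of the same number,
  `p ≥ q` if and only if `truncSum p ≤ truncSum q` (`dominates_iff_truncSum`).
* `truncSum p` is concave, and its second difference at `a` is minus the multiplicity of `a`
  (`truncSum_second_difference`).  Hence it determines `p`, and `p` is symplectic if and only if
  `truncSum p` is even at all even arguments (`isSymplectic_iff_even_truncSum`).
* A partition `r` is symplectic if and only if `r.topSum` is even at each of its corners, that is,
  the arguments where its second difference is nonzero (`isSymplectic_of_corners` and
  `topSum_linear_of_odd`).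

Write `k = 2m`, let `h` and `f = 2 truncSum E + h` be the functions of `[(2n_k+1) ⋯ (2n_1+1)]` and
of `q⁻`, and call `t` a gap point if `2n_{2j-1}+1 < t < 2n_{2j}+1` for some `j`.  Off the gap points
`h` is even; at gap points it is linear with the parity of `t + 1`.  Therefore the collapse `c'` has
function `h + 1` at gap points and `h` elsewhere (`isSpCollapse_oddParts`), so the function `g` of
`p₂` is `f + 1` at gap points and `f` elsewhere.  Let `D` be equal to `f + 1` at the gap points that
are not odd elements of `E`, and to `f` elsewhere.  It is the function of the explicit partition
`fullCollapse`, and it is characterised by two extremal properties.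

* Any symplectic partition with function `≥ f` has function `≥ D`: parity forces the increment at
  even gap points, and concavity then forces it at odd gap points where `f` is linear.  So
  `fullCollapse` is the collapse of `q⁻` (`isSpCollapse_fullCollapse`).
* Any symplectic `r` with `r.topSum ≤ g` has `r.topSum ≤ D`: at an odd gap point in `E` the value
  `g` is odd, so attaining it would make `r.topSum` linear there, whereas `g` is strictly concave.
  So the transpose of `fullCollapse` is the collapse of the transpose of `p₂`
  (`isSpCollapse_transposeP_fullCollapse`).

Uniqueness of collapses (`IsSpCollapse.unique`) concludes.
-/

/-- The sum of the `k` largest elements of a multiset of natural numbers. -/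
def Multiset.topSum (p : Multiset ℕ) (k : ℕ) : ℕ :=
  (((p.sort (· ≤ ·)).reverse).take k).sum

/-- Dominance order on partitions (finite multisets of positive integers) of the same
number: `Dominates p q` means `p` and `q` partition the same integer and, for every `k`,
the sum of the `k` largest parts of `p` is at least that of `q`. -/
def Dominates (p q : Multiset ℕ) : Prop :=
  p.sum = q.sum ∧ ∀ k, q.topSum k ≤ p.topSum k

/-- A partition is symplectic if each of its odd parts occurs with even multiplicity. -/
def IsSymplectic (p : Multiset ℕ) : Prop :=
  ∀ a, Odd a → Even (p.count a)

/-- The transpose of a partition: the `i`-th part (for `i ≥ 1`) is the number of parts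
that are `≥ i`; zero parts are discarded. -/
def transposeP (p : Multiset ℕ) : Multiset ℕ :=
  ((Multiset.range p.sum).map fun i => (p.filter fun a => i + 1 ≤ a).card).filter (0 < ·)

/-- `qminus q` is `q⁻`: one occurrence of the smallest part `a` of `q` is replaced by
`a - 1` (deleted if `a = 1`). -/
def qminus (q : Multiset ℕ) : Multiset ℕ :=
  match (q.sort (· ≤ ·)).head? with
  | none => 0
  | some a => if a ≤ 1 then q.erase a else (a - 1) ::ₘ q.erase a

/-- `IsSpCollapse p c` : `c` is the Sp-collapse of `p`, i.e. the greatest symplectic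
partition dominated by `p` in the dominance order. -/
def IsSpCollapse (p c : Multiset ℕ) : Prop :=
  0 ∉ c ∧ IsSymplectic c ∧ Dominates p c ∧
    ∀ q : Multiset ℕ, 0 ∉ q → IsSymplectic q → Dominates p q → Dominates c q

/-- A symplectic partition is special if it has an even number of even parts between any
two consecutive (distinct) odd parts, and an even number of even parts greater than its
largest odd part. -/
def IsSpecial (p : Multiset ℕ) : Prop :=
  IsSymplectic p ∧
    (∀ a b, a ∈ p → b ∈ p → Odd a → Odd b → a < b →
        (∀ c ∈ p, Odd c → ¬(a < c ∧ c < b)) →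
        Even ((p.filter fun x => Even x ∧ a < x ∧ x < b).card)) ∧
    (∀ a, a ∈ p → Odd a → (∀ c ∈ p, Odd c → c ≤ a) →
        Even ((p.filter fun x => Even x ∧ a < x).card))

/-- `IsSpExpansion p e` : `e` is the Sp-expansion of `p`, i.e. the smallest special
symplectic partition dominating `p` in the dominance order. -/
def IsSpExpansion (p e : Multiset ℕ) : Prop :=
  0 ∉ e ∧ IsSpecial e ∧ Dominates e p ∧
    ∀ q : Multiset ℕ, 0 ∉ q → IsSpecial q → Dominates q p → Dominates q e

/-! ### Truncated sums -/

/-- The sum of `min x t` over the parts `x` of `p`: the number of boxes in the first `t` columns of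
the Young diagram of `p`. -/
def truncSum (p : Multiset ℕ) (t : ℕ) : ℕ := (p.map fun x => min x t).sum

/-- The sum of `x - s` (truncated subtraction) over the parts `x` of `p`: the number of boxes of the
Young diagram of `p` outside its first `s` columns. -/
def excess (p : Multiset ℕ) (s : ℕ) : ℕ := (p.map fun x => x - s).sum

theorem truncSum_cons (a : ℕ) (p : Multiset ℕ) (t : ℕ) :
    truncSum (a ::ₘ p) t = min a t + truncSum p t := by
  simp [truncSum]

theorem truncSum_add (p q : Multiset ℕ) (t : ℕ) :
    truncSum (p + q) t = truncSum p t + truncSum q t := by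
  simp [truncSum]

theorem truncSum_at_zero (p : Multiset ℕ) : truncSum p 0 = 0 := by
  simp [truncSum]

theorem truncSum_add_excess (p : Multiset ℕ) (t : ℕ) :
    truncSum p t + excess p t = p.sum := by
  induction p using Multiset.induction with
  | empty => simp [truncSum, excess]
  | cons a p ih =>
    simp only [truncSum, excess, Multiset.map_cons, Multiset.sum_cons] at ih ⊢
    omega

theorem truncSum_succ (p : Multiset ℕ) (t : ℕ) :
    truncSum p (t + 1) = truncSum p t + (p.filter fun a => t + 1 ≤ a).card := by
  induction p using Multiset.induction with
  | empty => simp [truncSum]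
  | cons a p ih =>
    rw [truncSum_cons, truncSum_cons, ih]
    by_cases h : t + 1 ≤ a
    · simp only [h, Multiset.filter_cons_of_pos, Multiset.card_cons]; omega
    · simp only [h, not_false_eq_true, Multiset.filter_cons_of_neg]; omega

/-- The second difference of `truncSum p` at `a` is minus the multiplicity of `a` in `p`. -/
theorem truncSum_second_difference (p : Multiset ℕ) (t : ℕ) :
    truncSum p t + truncSum p (t + 2) + p.count (t + 1) = 2 * truncSum p (t + 1) := by
  induction p using Multiset.induction with
  | empty => simp [truncSum]
  | cons a p ih =>
    simp only [truncSum_cons, Multiset.count_cons]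
    split_ifs <;> omega

theorem truncSum_eq_sum (p : Multiset ℕ) {t : ℕ} (h : ∀ x ∈ p, x ≤ t) :
    truncSum p t = p.sum := by
  rw [truncSum, Multiset.map_congr rfl fun x hx => min_eq_left (h x hx), Multiset.map_id']

theorem le_sum_of_mem {p : Multiset ℕ} {x : ℕ} (h : x ∈ p) : x ≤ p.sum :=
  Multiset.single_le_sum (fun _ _ => Nat.zero_le _) x h

theorem sum_eq_of_truncSum {p q : Multiset ℕ} (t₀ : ℕ)
    (h : ∀ t, t₀ ≤ t → truncSum p t = truncSum q t) : p.sum = q.sum := by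
  have h1 := h (t₀ + p.sum + q.sum) (by omega)
  rw [truncSum_eq_sum p, truncSum_eq_sum q] at h1
  · exact h1
  · intro x hx; have := le_sum_of_mem hx; omega
  · intro x hx; have := le_sum_of_mem hx; omega

theorem eq_of_truncSum {p q : Multiset ℕ} (hp : 0 ∉ p) (hq : 0 ∉ q)
    (h : ∀ t, truncSum p t = truncSum q t) : p = q := by
  ext a
  rcases a with _ | a
  · rw [Multiset.count_eq_zero_of_notMem hp, Multiset.count_eq_zero_of_notMem hq]
  · have h1 := truncSum_second_difference p a
    have h2 := truncSum_second_difference q a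
    rw [h, h, h] at h1
    omega

/-- Up to an even number, the difference of `truncSum p` at `a + 1` and `a - 1` is the multiplicity
of `a`, so the condition on odd parts propagates evenness from `0` to all even arguments. -/
theorem isSymplectic_iff_even_truncSum (p : Multiset ℕ) :
    IsSymplectic p ↔ ∀ t, Even t → Even (truncSum p t) := by
  constructor
  · rintro h t ⟨j, rfl⟩
    induction j with
    | zero => simp [truncSum_at_zero]
    | succ j ih =>
      have h1 := truncSum_second_difference p (j + j)
      have h2 := h (j + j + 1) ⟨j, by omega⟩
      rw [show j + 1 + (j + 1) = j + j + 2 by omega]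
      grind
  · rintro h a ⟨j, rfl⟩
    have h1 := truncSum_second_difference p (2 * j)
    have h2 := h (2 * j) (by simp)
    have h3 := h (2 * j + 2) ⟨j + 1, by omega⟩
    grind

/-! ### Largest parts and dominance -/

theorem List.sum_take_le_excess (l : List ℕ) (t s : ℕ) :
    (l.take t).sum ≤ t * s + (l.map fun x => x - s).sum := by
  induction l generalizing t with
  | nil => simp
  | cons a l ih =>
    cases t with
    | zero => simp
    | succ t =>
      have := ih t
      simp only [List.take_succ_cons, List.sum_cons, List.map_cons, add_mul]
      omega

/-- Equality case of `List.sum_take_le_excess`: for a decreasing list, the first `t` entries include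
all entries `> s` and, unless `s = 0`, only entries `≥ s`. -/
theorem List.sum_take_eq_excess (l : List ℕ) (hl : l.Pairwise (· ≥ ·)) (t s : ℕ)
    (h1 : (l.filter fun x => s < x).length ≤ t)
    (h2 : s = 0 ∨ t ≤ (l.filter fun x => s ≤ x).length) :
    (l.take t).sum = t * s + (l.map fun x => x - s).sum := by
  induction l generalizing t with
  | nil =>
    rcases h2 with rfl | h2
    · simp
    · simp at h2; simp [h2]
  | cons a l ih =>
    rw [List.pairwise_cons] at hl
    obtain ⟨ha, hl⟩ := hl
    have small : a ≤ s → (l.filter fun x => s < x) = [] := fun has =>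
      List.filter_eq_nil_iff.2 fun x hx => by have := ha x hx; simp; omega
    have small' : a < s → (l.filter fun x => s ≤ x) = [] := fun has =>
      List.filter_eq_nil_iff.2 fun x hx => by have := ha x hx; simp; omega
    cases t with
    | zero =>
      simp only [Nat.le_zero, List.length_eq_zero_iff, List.filter_eq_nil_iff] at h1
      simp only [List.take_zero, List.sum_nil, zero_mul, zero_add]
      symm
      rw [List.sum_eq_zero]
      simp only [List.mem_map]
      rintro x ⟨y, hy, rfl⟩
      have := h1 y hy
      simp at this
      omega
    | succ t =>
      have hsa : s ≤ a := by
        by_contra hlt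
        rcases h2 with rfl | h2
        · omega
        · simp [hlt, small' (by omega)] at h2
      have := ih hl t (by
          by_cases hlt : s < a
          · simpa [List.filter_cons, hlt] using h1
          · simp [small (by omega)])
        (h2.imp id fun h2 => by simpa [List.filter_cons, hsa] using h2)
      simp only [List.take_succ_cons, List.sum_cons, List.map_cons, add_mul]
      omega

theorem coe_reverse_sort (p : Multiset ℕ) :
    (((p.sort (· ≤ ·)).reverse : List ℕ) : Multiset ℕ) = p := by
  rw [Multiset.coe_reverse, Multiset.sort_eq]

theorem pairwise_reverse_sort (p : Multiset ℕ) :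
    (p.sort (· ≤ ·)).reverse.Pairwise (· ≥ ·) := by
  rw [List.pairwise_reverse]
  exact Multiset.pairwise_sort p _

theorem topSum_coe (l : List ℕ) (hl : l.Pairwise (· ≥ ·)) (t : ℕ) :
    (l : Multiset ℕ).topSum t = (l.take t).sum := by
  have : ((l : Multiset ℕ).sort (· ≤ ·)).reverse = l :=
    List.Perm.eq_of_pairwise (fun _ _ _ _ h1 h2 => le_antisymm h2 h1)
      (pairwise_reverse_sort _) hl (Multiset.coe_eq_coe.1 (coe_reverse_sort _))
  rw [Multiset.topSum, this]

theorem exists_sorted (p : Multiset ℕ) :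
    ∃ l : List ℕ, l.Pairwise (· ≥ ·) ∧ (l : Multiset ℕ) = p :=
  ⟨_, pairwise_reverse_sort p, coe_reverse_sort p⟩

theorem topSum_le_excess (p : Multiset ℕ) (t s : ℕ) :
    p.topSum t ≤ t * s + excess p s := by
  obtain ⟨l, hl, rfl⟩ := exists_sorted p
  rw [topSum_coe l hl]
  exact List.sum_take_le_excess l t s

/-- Together with `topSum_le_excess`, this says that `p.topSum` is the Legendre transform of
`excess p`. -/
theorem topSum_eq_excess (p : Multiset ℕ) (t s : ℕ)
    (h1 : (p.filter fun x => s < x).card ≤ t)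
    (h2 : s = 0 ∨ t ≤ (p.filter fun x => s ≤ x).card) :
    p.topSum t = t * s + excess p s := by
  obtain ⟨l, hl, rfl⟩ := exists_sorted p
  rw [topSum_coe l hl]
  exact List.sum_take_eq_excess l hl t s h1 h2

/-- For every `t` some `s` satisfies the hypotheses of `topSum_eq_excess`; the least candidate gives
a strict inequality in the second one. -/
theorem exists_threshold (p : Multiset ℕ) (t : ℕ) :
    ∃ s, (p.filter fun x => s < x).card ≤ t ∧
      (s = 0 ∨ t < (p.filter fun x => s ≤ x).card) := by
  classical
  have hex : ∃ s, (p.filter fun x => s < x).card ≤ t := by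
    refine ⟨p.sum, ?_⟩
    rw [Multiset.filter_eq_nil.2]
    · simp
    · intro x hx; have := le_sum_of_mem hx; omega
  refine ⟨Nat.find hex, Nat.find_spec hex, ?_⟩
  rcases h : Nat.find hex with _ | s
  · exact Or.inl rfl
  · right
    have := Nat.find_min hex (m := s) (by omega)
    simpa [Nat.succ_le_iff] using this

/-- Transposition reverses dominance: comparing sums of largest parts amounts to the reverse
comparison of the numbers of boxes in the first `t` columns. -/
theorem dominates_iff_truncSum {p q : Multiset ℕ} (hs : p.sum = q.sum) :
    Dominates p q ↔ ∀ t, truncSum p t ≤ truncSum q t := by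
  have key : (∀ t, truncSum p t ≤ truncSum q t) ↔ ∀ s, excess q s ≤ excess p s := by
    refine forall_congr' fun t => ?_
    have h1 := truncSum_add_excess p t
    have h2 := truncSum_add_excess q t
    omega
  rw [key]
  constructor
  · rintro ⟨-, h⟩ s
    have h1 := topSum_eq_excess q (q.filter fun x => s ≤ x).card s
      (Multiset.card_le_card (Multiset.monotone_filter_right _ fun _ hx => hx.le)) (Or.inr le_rfl)
    have h2 := topSum_le_excess p (q.filter fun x => s ≤ x).card s
    have h3 := h (q.filter fun x => s ≤ x).card
    omega
  · refine fun h => ⟨hs, fun k => ?_⟩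
    obtain ⟨s, h1, h2⟩ := exists_threshold p k
    rw [topSum_eq_excess p k s h1 (h2.imp id le_of_lt)]
    exact (topSum_le_excess q k s).trans (by have := h s; omega)

/-! ### Corners of the sum of largest parts -/

theorem excess_zero (p : Multiset ℕ) : excess p 0 = p.sum := by
  simp [excess]

theorem excess_pred (p : Multiset ℕ) (a : ℕ) :
    excess p a = excess p (a + 1) + (p.filter fun x => a + 1 ≤ x).card := by
  have h1 := truncSum_add_excess p a
  have h2 := truncSum_add_excess p (a + 1)
  have h3 := truncSum_succ p a
  omega

theorem card_filter_le (p : Multiset ℕ) (a : ℕ) :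
    (p.filter fun x => a ≤ x).card = (p.filter fun x => a + 1 ≤ x).card + p.count a := by
  induction p using Multiset.induction with
  | empty => simp
  | cons b p ih =>
    simp only [Multiset.filter_cons, Multiset.card_add, Multiset.count_cons, ih]
    split_ifs <;> simp <;> omega

theorem topSum_card_filter (p : Multiset ℕ) (a : ℕ) :
    p.topSum (p.filter fun x => a ≤ x).card = (p.filter fun x => a ≤ x).card * a + excess p a :=
  topSum_eq_excess p _ a
    (Multiset.card_le_card (Multiset.monotone_filter_right _ fun _ hx => hx.le)) (Or.inr le_rfl)

/-- The number of parts `≥ a + 1`, if positive, is a corner of `p.topSum`. -/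
theorem topSum_corner (p : Multiset ℕ) (a u : ℕ)
    (hu : (p.filter fun x => a + 1 ≤ x).card = u + 1) :
    p.topSum u + p.topSum (u + 2) < 2 * p.topSum (u + 1) := by
  have h1 := topSum_card_filter p (a + 1)
  have h2 := topSum_le_excess p u (a + 1)
  have h3 := topSum_le_excess p (u + 2) a
  have h4 := excess_pred p a
  rw [hu] at h1 h4
  rw [h1]
  nlinarith

/-- The parts equal to `a` contribute the difference of two values of `p.topSum`, each at `0` or at a
corner; if these values are even and `a` is odd, the multiplicity of `a` is even. -/
theorem isSymplectic_of_corners (p : Multiset ℕ)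
    (h : ∀ u, p.topSum u + p.topSum (u + 2) < 2 * p.topSum (u + 1) →
      Even (p.topSum (u + 1))) : IsSymplectic p := by
  have even : ∀ a, Even (p.topSum (p.filter fun x => a + 1 ≤ x).card) := by
    intro a
    rcases hu : (p.filter fun x => a + 1 ≤ x).card with _ | u
    · simp [Multiset.topSum]
    · exact h u (topSum_corner p a u hu)
  intro a ha
  obtain ⟨b, rfl⟩ : ∃ b, a = b + 1 := ⟨a - 1, by have := ha.pos; omega⟩
  have h1 := even b
  have h2 := even (b + 1)
  rw [topSum_card_filter] at h1 h2
  have h3 := excess_pred p (b + 1)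
  have h4 := card_filter_le p (b + 1)
  grind

/-- Converse of `isSymplectic_of_corners`: for symplectic `p` the function `p.topSum` has no corner
where its value is odd. -/
theorem topSum_linear_of_odd {p : Multiset ℕ} (hp : IsSymplectic p) (u : ℕ)
    (hodd : Odd (p.topSum (u + 1))) :
    p.topSum u + p.topSum (u + 2) = 2 * p.topSum (u + 1) := by
  have hsum : Even p.sum := by
    rw [← truncSum_eq_sum p (t := 2 * p.sum)]
    · exact (isSymplectic_iff_even_truncSum p).1 hp _ (by simp)
    · intro x hx; have := le_sum_of_mem hx; omega
  -- The parts `> s` form complete blocks of equal parts, so their sum is even.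
  have hblock : ∀ s, Even ((p.filter fun x => s + 1 ≤ x).card * s + excess p s) := by
    intro s
    induction s with
    | zero => simpa [excess_zero] using hsum
    | succ s ih =>
      have h3 := excess_pred p s
      have h4 := card_filter_le p (s + 1)
      rcases Nat.even_or_odd (s + 1) with he | ho
      · grind
      · have := hp _ ho
        grind
  obtain ⟨s, h1, h2⟩ := exists_threshold p (u + 1)
  have e1 := topSum_eq_excess p (u + 1) s h1 (h2.imp id le_of_lt)
  have hb := hblock s
  rw [← Nat.not_even_iff_odd] at hodd
  rcases h2 with rfl | h2
  · simp only [mul_zero, zero_add] at e1 hb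
    exact absurd (e1 ▸ hb) hodd
  · have hlt : (p.filter fun x => s < x).card ≠ u + 1 := by
      intro h
      simp only [Nat.succ_le_iff, h] at hb
      exact hodd (e1 ▸ hb)
    have e0 := topSum_eq_excess p u s (by omega) (Or.inr (by omega))
    have e2 := topSum_eq_excess p (u + 2) s (by omega) (Or.inr (by omega))
    rw [e0, e1, e2]
    ring

theorem IsSpCollapse.unique {p c₁ c₂ : Multiset ℕ} (h₁ : IsSpCollapse p c₁)
    (h₂ : IsSpCollapse p c₂) : c₁ = c₂ := by
  have d₁ := h₁.2.2.2 c₂ h₂.1 h₂.2.1 h₂.2.2.1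
  have d₂ := h₂.2.2.2 c₁ h₁.1 h₁.2.1 h₁.2.2.1
  exact eq_of_truncSum h₁.1 h₂.1 fun t => le_antisymm
    ((dominates_iff_truncSum d₁.1).1 d₁ t) ((dominates_iff_truncSum d₂.1).1 d₂ t)

/-! ### The transpose -/

theorem List.sum_take_filter_pos (l : List ℕ) (hl : l.Pairwise (· ≥ ·)) (t : ℕ) :
    ((l.filter fun x => 0 < x).take t).sum = (l.take t).sum := by
  induction l generalizing t with
  | nil => simp
  | cons a l ih =>
    rw [List.pairwise_cons] at hl
    obtain ⟨ha, hl⟩ := hl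
    cases t with
    | zero => simp
    | succ t =>
      rcases Nat.eq_zero_or_pos a with rfl | hpos
      · have := ih hl (t + 1)
        have hz : ∀ x ∈ l, x = 0 := fun x hx => Nat.le_zero.1 (ha x hx)
        have h0 : (l.take t).sum = 0 :=
          List.sum_eq_zero fun x hx => hz x (List.mem_of_mem_take hx)
        have h1 : (l.filter fun x => 0 < x) = [] :=
          List.filter_eq_nil_iff.2 fun x hx => by simp [hz x hx]
        simp [h0, h1]
      · simp [hpos, ih hl t]

theorem sum_columns (p : Multiset ℕ) (t : ℕ) :
    ((List.range t).map fun i => (p.filter fun a => i + 1 ≤ a).card).sum = truncSum p t := by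
  induction t with
  | zero => simp [truncSum_at_zero]
  | succ t ih =>
    rw [List.range_succ, List.map_append, List.sum_append, ih, truncSum_succ]
    simp

theorem transposeP_eq_coe (p : Multiset ℕ) :
    transposeP p = ((((List.range p.sum).map fun i => (p.filter fun a => i + 1 ≤ a).card).filter
      fun x => 0 < x : List ℕ) : Multiset ℕ) := rfl

theorem pairwise_columns (p : Multiset ℕ) (N : ℕ) :
    ((List.range N).map fun i => (p.filter fun a => i + 1 ≤ a).card).Pairwise (· ≥ ·) := by
  rw [List.pairwise_map]
  exact List.pairwise_lt_range.imp fun {i j} hij =>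
    Multiset.card_le_card (Multiset.monotone_filter_right _ fun x (hx : j + 1 ≤ x) => by omega)

/-- The `t` largest parts of the transpose are the first `t` columns. -/
theorem topSum_transposeP (p : Multiset ℕ) (t : ℕ) :
    (transposeP p).topSum t = truncSum p t := by
  rw [transposeP_eq_coe, topSum_coe _ ((pairwise_columns p _).filter _),
    List.sum_take_filter_pos _ (pairwise_columns p _), ← List.map_take, List.take_range,
    sum_columns]
  rcases le_total t p.sum with h | h
  · rw [min_eq_left h]
  · rw [min_eq_right h, truncSum_eq_sum p, truncSum_eq_sum p]
    · intro x hx; have := le_sum_of_mem hx; omega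
    · intro x hx; exact le_sum_of_mem hx

theorem sum_transposeP (p : Multiset ℕ) : (transposeP p).sum = p.sum := by
  have h := List.sum_take_filter_pos _ (pairwise_columns p p.sum) p.sum
  rw [List.take_of_length_le ((List.length_filter_le _ _).trans (by simp)),
    List.take_of_length_le (by simp), sum_columns, truncSum_eq_sum p fun x => le_sum_of_mem] at h
  rw [transposeP_eq_coe, Multiset.sum_coe, h]

theorem qminus_one_cons (p : Multiset ℕ) (hp : ∀ x ∈ p, 0 < x) : qminus (1 ::ₘ p) = p := by
  rw [qminus, Multiset.sort_cons (r := (· ≤ ·)) 1 p (fun x hx => hp x hx)]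
  simp

/-! ### The gaps between paired odd parts -/

/-- `t` lies strictly between the two odd parts of one of the pairs
`2 * n (2 * j + 1) + 1 < 2 * n (2 * j + 2) + 1`, for `j < m`. -/
def InGap (n : ℕ → ℕ) (m t : ℕ) : Prop :=
  ∃ j < m, 2 * n (2 * j + 1) + 1 < t ∧ t < 2 * n (2 * j + 2) + 1

/-- The partition with parts `2 * n i + 1` for `1 ≤ i ≤ k`. -/
def oddParts (n : ℕ → ℕ) (k : ℕ) : Multiset ℕ :=
  (Multiset.range k).map fun i => 2 * n (i + 1) + 1

/-- The partition obtained from `oddParts n k` by adding one to the parts with `i` odd and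
subtracting one from the parts with `i` even.  The index below is `i - 1`. -/
def oddCollapse (n : ℕ → ℕ) (k : ℕ) : Multiset ℕ :=
  (Multiset.range k).map fun i => if Even i then 2 * n (i + 1) + 2 else 2 * n (i + 1)

theorem sum_map_range_two_mul (f : ℕ → ℕ) (m : ℕ) :
    ((Multiset.range (2 * m)).map f).sum = ∑ j ∈ Finset.range m, (f (2 * j) + f (2 * j + 1)) := by
  change ∑ i ∈ Finset.range (2 * m), f i = _
  induction m with
  | zero => simp
  | succ m ih =>
    rw [Finset.sum_range_succ, ← ih, show 2 * (m + 1) = 2 * m + 1 + 1 by ring,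
      Finset.sum_range_succ, Finset.sum_range_succ, add_assoc]

theorem truncSum_oddParts (n : ℕ → ℕ) (m t : ℕ) :
    truncSum (oddParts n (2 * m)) t =
      ∑ j ∈ Finset.range m, (min (2 * n (2 * j + 1) + 1) t + min (2 * n (2 * j + 2) + 1) t) := by
  rw [truncSum, oddParts, Multiset.map_map, sum_map_range_two_mul]
  rfl

theorem truncSum_oddCollapse (n : ℕ → ℕ) (m t : ℕ) :
    truncSum (oddCollapse n (2 * m)) t =
      ∑ j ∈ Finset.range m, (min (2 * n (2 * j + 1) + 2) t + min (2 * n (2 * j + 2)) t) := by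
  rw [truncSum, oddCollapse, Multiset.map_map, sum_map_range_two_mul]
  refine Finset.sum_congr rfl fun j _ => ?_
  simp

section Gaps

variable {n : ℕ → ℕ} {m : ℕ} (hn : ∀ i j, 1 ≤ i → i < j → j ≤ 2 * m → n i < n j)
include hn

open Classical in
/-- The gaps are disjoint, so a point lies in at most one of them. -/
theorem sum_gap_indicator (t : ℕ) :
    (∑ j ∈ Finset.range m,
      if 2 * n (2 * j + 1) + 1 < t ∧ t < 2 * n (2 * j + 2) + 1 then 1 else 0) =
      if InGap n m t then 1 else 0 := by
  split_ifs with h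
  · obtain ⟨j, hj, h1, h2⟩ := h
    rw [Finset.sum_eq_single_of_mem j (Finset.mem_range.2 hj), if_pos ⟨h1, h2⟩]
    intro i hi hij
    rw [Finset.mem_range] at hi
    rw [if_neg]
    rintro ⟨h3, h4⟩
    rcases lt_or_gt_of_ne hij with hlt | hlt
    · rcases (show 2 * i + 2 ≤ 2 * j + 1 by omega).eq_or_lt with h | h
      · omega
      · have := hn (2 * i + 2) (2 * j + 1) (by omega) h (by omega); omega
    · have := hn (2 * j + 2) (2 * i + 1) (by omega) (by omega) (by omega); omega
  · refine Finset.sum_eq_zero fun j hj => if_neg fun hh => h ⟨j, Finset.mem_range.1 hj, hh⟩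

open Classical in
theorem truncSum_oddCollapse_eq (t : ℕ) :
    truncSum (oddCollapse n (2 * m)) t =
      truncSum (oddParts n (2 * m)) t + if InGap n m t then 1 else 0 := by
  rw [← sum_gap_indicator hn, truncSum_oddParts, truncSum_oddCollapse, ← Finset.sum_add_distrib]
  refine Finset.sum_congr rfl fun j hj => ?_
  rw [Finset.mem_range] at hj
  have := hn (2 * j + 1) (2 * j + 2) (by omega) (by omega) (by omega)
  split_ifs <;> omega

open Classical in
/-- For a pair `b < a` of odd numbers, `min b t + min a t` is even unless `b < t < a`, in which case
it is `b + t`, of the parity of `t + 1`. -/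
theorem even_truncSum_oddParts_add (t : ℕ) :
    Even (truncSum (oddParts n (2 * m)) t + (if InGap n m t then 1 else 0) * (t + 1)) := by
  rw [← sum_gap_indicator hn, truncSum_oddParts, Finset.sum_mul, ← Finset.sum_add_distrib]
  refine Finset.even_sum _ fun j hj => ?_
  rw [Finset.mem_range] at hj
  have := hn (2 * j + 1) (2 * j + 2) (by omega) (by omega) (by omega)
  rw [Nat.even_iff]
  split_ifs <;> omega

theorem even_truncSum_oddParts {t : ℕ} (ht : ¬ InGap n m t) :
    Even (truncSum (oddParts n (2 * m)) t) := by
  simpa [ht] using even_truncSum_oddParts_add hn t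

theorem even_truncSum_oddParts_add_succ {t : ℕ} (ht : InGap n m t) :
    Even (truncSum (oddParts n (2 * m)) t + (t + 1)) := by
  simpa [ht] using even_truncSum_oddParts_add hn t

theorem count_oddParts_eq_zero {t : ℕ} (ht : InGap n m t) :
    (oddParts n (2 * m)).count t = 0 := by
  rw [Multiset.count_eq_zero]
  intro hmem
  simp only [oddParts, Multiset.mem_map, Multiset.mem_range] at hmem
  obtain ⟨i, hi, rfl⟩ := hmem
  obtain ⟨j, hj, h1, h2⟩ := ht
  rcases lt_trichotomy (i + 1) (2 * j + 1) with h | h | h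
  · have := hn _ _ (by omega) h (by omega); omega
  · rw [h] at h1; omega
  · rcases (show 2 * j + 2 ≤ i + 1 by omega).eq_or_lt with h | h
    · rw [h] at h2; omega
    · have := hn _ _ (by omega) h (by omega); omega

theorem oddParts_linear {t : ℕ} (ht : InGap n m (t + 1)) :
    truncSum (oddParts n (2 * m)) t + truncSum (oddParts n (2 * m)) (t + 2) =
      2 * truncSum (oddParts n (2 * m)) (t + 1) := by
  have h1 := truncSum_second_difference (oddParts n (2 * m)) t
  rw [count_oddParts_eq_zero hn ht] at h1
  omega

omit hn in
theorem InGap.neighbours {t : ℕ} (ht : InGap n m (t + 1)) (he : Even t) :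
    InGap n m t ∧ InGap n m (t + 2) := by
  obtain ⟨j, hj, h1, h2⟩ := ht
  obtain ⟨s, rfl⟩ := he
  exact ⟨⟨j, hj, by omega, by omega⟩, ⟨j, hj, by omega, by omega⟩⟩

theorem not_inGap_of_le {t : ℕ} (ht : 2 * n (2 * m) + 1 ≤ t) : ¬ InGap n m t := by
  rintro ⟨j, hj, h1, h2⟩
  rcases (show 2 * j + 2 ≤ 2 * m by omega).eq_or_lt with h | h
  · rw [h] at h2; omega
  · have := hn _ _ (by omega) h le_rfl; omega

theorem zero_notMem_oddCollapse : 0 ∉ oddCollapse n (2 * m) := by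
  simp only [oddCollapse, Multiset.mem_map, Multiset.mem_range, not_exists, not_and]
  intro i hi
  split_ifs with he
  · simp
  · have h0 : i ≠ 0 := by rintro rfl; simp at he
    have := hn 1 (i + 1) le_rfl (by omega) (by omega)
    omega

end Gaps

/-! ### The two symplectic collapses -/

/-- If `f` is odd at even gap points and bounded above by the function of a symplectic partition
`q`, then `truncSum q` exceeds `f` at even gap points by parity, and hence, by concavity, also at
odd gap points where `f` is linear. -/
theorem le_truncSum_of_gap {f : ℕ → ℕ} {n : ℕ → ℕ} {m : ℕ} {q : Multiset ℕ}
    (hq : IsSymplectic q) (hf : ∀ t, f t ≤ truncSum q t)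
    (hodd : ∀ t, InGap n m t → Even t → Odd (f t)) {t : ℕ} (ht : InGap n m t)
    (hlin : ∀ u, t = u + 1 → Odd t → f u + f (u + 2) = 2 * f (u + 1)) :
    f t + 1 ≤ truncSum q t := by
  have main : ∀ t, InGap n m t → Even t → f t + 1 ≤ truncSum q t := by
    intro t ht he
    have h1 := hodd t ht he
    have h2 := (isSymplectic_iff_even_truncSum q).1 hq t he
    have h3 := hf t
    grind
  rcases Nat.even_or_odd t with he | ho
  · exact main t ht he
  · obtain ⟨s, rfl⟩ := ho
    obtain ⟨g1, g2⟩ := ht.neighbours (by simp)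
    have h1 := main _ g1 (by simp)
    have h2 := main _ g2 (by simp [parity_simps])
    have h3 := hlin _ rfl (by simp)
    have h4 := truncSum_second_difference q (2 * s)
    omega

theorem isSpCollapse_oddParts {n : ℕ → ℕ} {m : ℕ}
    (hn : ∀ i j, 1 ≤ i → i < j → j ≤ 2 * m → n i < n j) :
    IsSpCollapse (oddParts n (2 * m)) (oddCollapse n (2 * m)) := by
  classical
  have hsum : (oddParts n (2 * m)).sum = (oddCollapse n (2 * m)).sum :=
    sum_eq_of_truncSum (2 * n (2 * m) + 1) fun t ht => by
      rw [truncSum_oddCollapse_eq hn, if_neg (not_inGap_of_le hn ht), add_zero]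
  refine ⟨zero_notMem_oddCollapse hn, (isSymplectic_iff_even_truncSum _).2 fun t he => ?_,
    (dominates_iff_truncSum hsum).2 fun t => ?_, fun q _ hq hdom => ?_⟩
  · rw [truncSum_oddCollapse_eq hn]
    have := even_truncSum_oddParts_add hn t
    split_ifs with h <;> simp only [h, if_true, if_false] at this <;> grind
  · rw [truncSum_oddCollapse_eq hn]; omega
  · have hf := (dominates_iff_truncSum hdom.1).1 hdom
    refine (dominates_iff_truncSum (hsum.symm.trans hdom.1)).2 fun t => ?_
    rw [truncSum_oddCollapse_eq hn]
    split_ifs with h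
    · refine le_truncSum_of_gap hq hf (fun u hu he => ?_) h ?_
      · have := even_truncSum_oddParts_add_succ hn hu
        grind
      · rintro u rfl -
        exact oddParts_linear hn h
    · simpa using hf t

/-- Replacing two copies of `x` by `x + 1` and `x - 1` lowers `truncSum` by one at `x` and leaves it
unchanged elsewhere. -/
theorem truncSum_split (X : Multiset ℕ) (hX : ∀ x ∈ X, 0 < x) (t : ℕ) :
    truncSum (X.map (· + 1)) t + truncSum (X.map (· - 1)) t + X.count t = 2 * truncSum X t := by
  induction X using Multiset.induction with
  | empty => simp [truncSum]
  | cons a X ih =>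
    have ha := hX a (by simp)
    have := ih fun x hx => hX x (by simp [hx])
    simp only [Multiset.map_cons, truncSum_cons, Multiset.count_cons]
    split_ifs <;> omega

open Classical in
/-- The distinct odd elements of `E` lying in a gap, each with multiplicity one. -/
noncomputable def gapSupport (n : ℕ → ℕ) (m : ℕ) (E : Multiset ℕ) : Multiset ℕ :=
  E.dedup.filter fun x => Odd x ∧ InGap n m x

open Classical in
/-- The partition obtained from `E + E + oddCollapse n (2 * m)` by replacing, for each odd element
`x` of `E` lying in a gap, two copies of `x` by `x + 1` and `x - 1`. -/
noncomputable def fullCollapse (n : ℕ → ℕ) (m : ℕ) (E : Multiset ℕ) : Multiset ℕ :=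
  (E - gapSupport n m E) + (E - gapSupport n m E) + (gapSupport n m E).map (· + 1) +
    (gapSupport n m E).map (· - 1) + oddCollapse n (2 * m)

theorem mem_gapSupport {n : ℕ → ℕ} {m : ℕ} {E : Multiset ℕ} {x : ℕ} :
    x ∈ gapSupport n m E ↔ x ∈ E ∧ Odd x ∧ InGap n m x := by
  simp [gapSupport]

open Classical in
theorem count_gapSupport (n : ℕ → ℕ) (m : ℕ) (E : Multiset ℕ) (t : ℕ) :
    (gapSupport n m E).count t = if t ∈ E ∧ Odd t ∧ InGap n m t then 1 else 0 := by
  rw [gapSupport, Multiset.count_eq_of_nodup ((Multiset.nodup_dedup E).filter _), ← gapSupport]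
  exact if_congr mem_gapSupport rfl rfl

theorem gapSupport_le (n : ℕ → ℕ) (m : ℕ) (E : Multiset ℕ) : gapSupport n m E ≤ E :=
  by classical exact (Multiset.filter_le _ _).trans (Multiset.dedup_le E)

section Full

variable {n : ℕ → ℕ} {m : ℕ} (hn : ∀ i j, 1 ≤ i → i < j → j ≤ 2 * m → n i < n j)
  (E : Multiset ℕ)
include hn

omit hn in
theorem truncSum_fullCollapse_add (t : ℕ) :
    truncSum (fullCollapse n m E) t + (gapSupport n m E).count t =
      truncSum (E + E + oddCollapse n (2 * m)) t := by
  classical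
  have h1 := truncSum_split (gapSupport n m E) (fun x hx => (mem_gapSupport.1 hx).2.1.pos) t
  have h2 : truncSum (E - gapSupport n m E) t + truncSum (gapSupport n m E) t = truncSum E t := by
    rw [← truncSum_add, Multiset.sub_add_cancel (gapSupport_le n m E)]
  simp only [fullCollapse, truncSum_add]
  omega

open Classical in
theorem truncSum_fullCollapse (t : ℕ) :
    truncSum (fullCollapse n m E) t = truncSum (E + E + oddParts n (2 * m)) t +
      if InGap n m t ∧ ¬ (t ∈ E ∧ Odd t) then 1 else 0 := by
  have h1 := truncSum_fullCollapse_add (n := n) (m := m) E t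
  rw [count_gapSupport, truncSum_add, truncSum_oddCollapse_eq hn] at h1
  rw [truncSum_add]
  by_cases h2 : InGap n m t <;> by_cases h3 : t ∈ E <;> by_cases h4 : Odd t <;>
    simp only [h2, h3, h4, and_true, and_false, if_true, if_false, not_true, not_false_eq_true]
      at h1 ⊢ <;> omega

theorem sum_fullCollapse :
    (E + E + oddParts n (2 * m)).sum = (fullCollapse n m E).sum := by
  classical
  refine sum_eq_of_truncSum (2 * n (2 * m) + 1) fun t ht => ?_
  rw [truncSum_fullCollapse hn, if_neg fun h => not_inGap_of_le hn ht h.1, add_zero]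

theorem zero_notMem_fullCollapse (hE : ∀ x ∈ E, 0 < x) : 0 ∉ fullCollapse n m E := by
  classical
  have h1 : 0 ∉ E - gapSupport n m E := fun h =>
    absurd (hE 0 (Multiset.mem_of_le (Multiset.sub_le_self _ _) h)) (lt_irrefl 0)
  have h2 : ∀ x ∈ gapSupport n m E, x - 1 ≠ 0 := by
    intro x hx
    obtain ⟨-, -, j, -, h, -⟩ := mem_gapSupport.1 hx
    omega
  simp only [fullCollapse, Multiset.mem_add, h1, zero_notMem_oddCollapse hn, Multiset.mem_map,
    false_or, or_false, not_or, not_exists, not_and]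
  exact ⟨fun x _ => by omega, h2⟩

theorem isSpCollapse_fullCollapse (hE : ∀ x ∈ E, 0 < x) :
    IsSpCollapse (E + E + oddParts n (2 * m)) (fullCollapse n m E) := by
  classical
  have hsum := sum_fullCollapse hn E
  refine ⟨zero_notMem_fullCollapse hn E hE, (isSymplectic_iff_even_truncSum _).2 fun t he => ?_,
    (dominates_iff_truncSum hsum).2 fun t => ?_, fun q _ hq hdom => ?_⟩
  · have h0 := even_truncSum_oddParts_add hn t
    rw [truncSum_fullCollapse hn, truncSum_add, truncSum_add]
    have ho : ¬ Odd t := Nat.not_odd_iff_even.2 he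
    by_cases h : InGap n m t <;> simp only [h, ho, if_true, if_false, and_false, not_false_eq_true,
      and_true] at h0 ⊢ <;> grind
  · rw [truncSum_fullCollapse hn]; omega
  · have hf := (dominates_iff_truncSum hdom.1).1 hdom
    refine (dominates_iff_truncSum (hsum.symm.trans hdom.1)).2 fun t => ?_
    rw [truncSum_fullCollapse hn]
    split_ifs with h
    · obtain ⟨h, hnE⟩ := h
      refine le_truncSum_of_gap hq hf (fun u hu he => ?_) h ?_
      · have := even_truncSum_oddParts_add_succ hn hu
        rw [truncSum_add, truncSum_add]
        grind
      · rintro u rfl ho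
        have hE0 : E.count (u + 1) = 0 := Multiset.count_eq_zero.2 fun h => hnE ⟨h, ho⟩
        have h1 := truncSum_second_difference (E + E + oddParts n (2 * m)) u
        rw [Multiset.count_add, Multiset.count_add, hE0, count_oddParts_eq_zero hn h] at h1
        omega
    · simpa using hf t

/-- The function of `fullCollapse` is odd only at odd gap points outside `E`, and there it is
linear. -/
theorem isSymplectic_transposeP_fullCollapse :
    IsSymplectic (transposeP (fullCollapse n m E)) := by
  classical
  refine isSymplectic_of_corners _ fun u hu => ?_
  simp only [topSum_transposeP] at hu ⊢
  rw [truncSum_fullCollapse hn, truncSum_add, truncSum_add]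
  by_cases hg : InGap n m (u + 1)
  · have hpar := even_truncSum_oddParts_add_succ hn hg
    rcases Nat.even_or_odd (u + 1) with he | ho
    · have : ¬ Odd (u + 1) := Nat.not_odd_iff_even.2 he
      simp only [hg, this, and_false, not_false_eq_true, and_true, if_true]
      grind
    · by_cases hE : u + 1 ∈ E
      · simp only [hE, ho, and_true, not_true, and_false, if_false]
        grind
      · -- The function is `f + 1` at `u`, `u + 1` and `u + 2`, and `f` is linear there.
        exfalso
        have he : Even u := by grind
        obtain ⟨g1, g2⟩ := hg.neighbours he
        have o1 : ¬ Odd u := Nat.not_odd_iff_even.2 he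
        have o2 : ¬ Odd (u + 2) := by grind
        simp only [truncSum_fullCollapse hn, hg, g1, g2, o1, o2, hE, and_false, false_and,
          not_false_eq_true, and_true, if_true] at hu
        have h1 := truncSum_second_difference (E + E + oddParts n (2 * m)) u
        rw [Multiset.count_add, Multiset.count_add, Multiset.count_eq_zero.2 hE,
          count_oddParts_eq_zero hn hg] at h1
        omega
  · have := even_truncSum_oddParts hn hg
    simp only [hg, false_and, if_false]
    grind

theorem isSpCollapse_transposeP_fullCollapse :
    IsSpCollapse (transposeP (E + E + oddCollapse n (2 * m)))
      (transposeP (fullCollapse n m E)) := by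
  classical
  have hle : ∀ t, truncSum (fullCollapse n m E) t ≤ truncSum (E + E + oddCollapse n (2 * m)) t :=
    fun t => by have := truncSum_fullCollapse_add (n := n) (m := m) E t; omega
  have hsum : (E + E + oddCollapse n (2 * m)).sum = (fullCollapse n m E).sum := by
    rw [← sum_fullCollapse hn E, Multiset.sum_add, Multiset.sum_add _ (oddParts n (2 * m)),
      (isSpCollapse_oddParts hn).2.2.1.1]
  refine ⟨by simp [transposeP], isSymplectic_transposeP_fullCollapse hn E,
    ⟨by rw [sum_transposeP, sum_transposeP, hsum], fun t => ?_⟩, fun r _ hr hdom => ?_⟩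
  · rw [topSum_transposeP, topSum_transposeP]; exact hle t
  · refine ⟨by rw [sum_transposeP, ← hsum, ← sum_transposeP, hdom.1], fun t => ?_⟩
    have hg : ∀ t, r.topSum t ≤ truncSum (E + E + oddCollapse n (2 * m)) t := fun t => by
      rw [← topSum_transposeP]; exact hdom.2 t
    rw [topSum_transposeP]
    have hD := truncSum_fullCollapse_add (n := n) (m := m) E t
    rw [count_gapSupport] at hD
    split_ifs at hD with h
    · obtain ⟨hmem, ho, hgap⟩ := h
      -- Otherwise `r.topSum` attains an odd value at a corner of its upper bound.
      by_contra hlt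
      obtain ⟨u, rfl⟩ : ∃ u, t = u + 1 := ⟨t - 1, by have := ho.pos; omega⟩
      have hval : r.topSum (u + 1) = truncSum (E + E + oddCollapse n (2 * m)) (u + 1) := by
        have := hg (u + 1); omega
      have hodd : Odd (r.topSum (u + 1)) := by
        have := even_truncSum_oddParts_add_succ hn hgap
        rw [hval, truncSum_add, truncSum_add, truncSum_oddCollapse_eq hn, if_pos hgap]
        grind
      have hlin := topSum_linear_of_odd hr u hodd
      have h1 := truncSum_second_difference (E + E + oddCollapse n (2 * m)) u
      have h2 : 0 < E.count (u + 1) := Multiset.count_pos.2 hmem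
      rw [Multiset.count_add, Multiset.count_add] at h1
      have := hg u
      have := hg (u + 2)
      omega
    · have := hg t
      omega

end Full

/-- Let `E` be a finite multiset of positive integers, `k ≥ 2` even, and
`n 1 < ⋯ < n k` nonnegative integers.  Let `q` consist of two copies of each element of
`E`, the parts `2 * n i + 1` for `1 ≤ i ≤ k`, and one additional part `1`, and let `p₂`
consist of two copies of each element of `E` together with the parts of the Sp-collapse
`c'` of `[(2 n k + 1) ⋯ (2 n 1 + 1)]`.  Then the Sp-collapse of the transpose of `p₂`
equals the transpose of the Sp-collapse of `q⁻`. -/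
theorem spCollapse_transpose_eq_transpose_spCollapse_qminus'
    (k : ℕ) (hk2 : 2 ≤ k) (hke : Even k)
    (E : Multiset ℕ) (hE : ∀ x ∈ E, 0 < x)
    (n : ℕ → ℕ) (hn : ∀ i j, 1 ≤ i → i < j → j ≤ k → n i < n j)
    (c' c d : Multiset ℕ)
    (hc' : IsSpCollapse ((Multiset.range k).map fun i => 2 * n (i + 1) + 1) c')
    (hc : IsSpCollapse (transposeP (E + E + c')) c)
    (hd : IsSpCollapse
      (qminus (E + E + (Multiset.range k).map (fun i => 2 * n (i + 1) + 1) +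
        ({1} : Multiset ℕ))) d) :
    c = transposeP d := by
  obtain ⟨m, rfl⟩ := hke.two_dvd
  change IsSpCollapse (oddParts n (2 * m)) c' at hc'
  change IsSpCollapse (qminus (E + E + oddParts n (2 * m) + {1})) d at hd
  have hpos : ∀ x ∈ E + E + oddParts n (2 * m), 0 < x := by
    intro x hx
    rw [Multiset.mem_add, Multiset.mem_add, or_self] at hx
    rcases hx with hx | hx
    · exact hE x hx
    · simp only [oddParts, Multiset.mem_map] at hx
      obtain ⟨i, -, rfl⟩ := hx
      omega
  rw [add_comm _ ({1} : Multiset ℕ), Multiset.singleton_add, qminus_one_cons _ hpos] at hd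
  obtain rfl := hc'.unique (isSpCollapse_oddParts hn)
  obtain rfl := hd.unique (isSpCollapse_fullCollapse hn E hE)
  exact hc.unique (isSpCollapse_transposeP_fullCollapse hn E)
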